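/- Let φ and ψ be LTL-formulas, let ρ be the set of propositional variables occurring in both φ and ψ, let q_1,…,q_m be the variables of φ not in ρ, and r_1,…,r_k the variables of ψ not in ρ. Let A_ρ = 2^ρ, identify each ρ-model with a word over A_ρ, and set L_φ = {ρ-models M : M,0 ⊨ ∃q_1…∃q_m φ} and L_¬ψ = {ρ-models M : M,0 ⊨ ∃r_1…∃r_k ¬ψ}. Then φ and ψ have a Craig interpolant in LTL if and only if L_φ and L_¬ψ are separable by an FO(<)-definable language over the alphabet A_ρ (i.e., there is an FO(<)-definable L ⊆ A_ρ⁺ with L_φ ⊆ L and L_¬ψ ∩ L = ∅). -/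

import Mathlib

open FirstOrder

/-! ### LTL over finite timelines -/

/-- LTL-formulas over propositional variables indexed by `ℕ`. -/
inductive LTL : Type
  | top : LTL
  | var : ℕ → LTL
  | and : LTL → LTL → LTL
  | not : LTL → LTL
  | next : LTL → LTL
  | ev : LTL → LTL
  | untl : LTL → LTL → LTL

/-- The propositional variables occurring in an LTL-formula. -/
def LTL.vars : LTL → Set ℕ
  | .top => ∅
  | .var p => {p}
  | .and φ ψ => φ.vars ∪ ψ.vars
  | .not φ => φ.vars
  | .next φ => φ.vars
  | .ev φ => φ.vars
  | .untl φ ψ => φ.vars ∪ ψ.vars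

/-- A finite temporal model `({0,…,ℓ}, <, V)`. -/
structure TModel : Type where
  len : ℕ
  V : ℕ → ℕ → Prop

/-- Truth of an LTL-formula at a time point of a finite temporal model. -/
def LTL.sat (M : TModel) : ℕ → LTL → Prop
  | _, .top => True
  | n, .var p => M.V p n
  | n, .and φ ψ => LTL.sat M n φ ∧ LTL.sat M n ψ
  | n, .not φ => ¬ LTL.sat M n φ
  | n, .next φ => n < M.len ∧ LTL.sat M (n + 1) φ
  | n, .ev φ => ∃ m, n < m ∧ m ≤ M.len ∧ LTL.sat M m φ
  | n, .untl φ ψ => ∃ m, n < m ∧ m ≤ M.len ∧ LTL.sat M m φ ∧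
      ∀ k, n < k → k < m → LTL.sat M k ψ

/-- Entailment in LTL over finite timelines. -/
def LTLEntails (φ ψ : LTL) : Prop :=
  ∀ M : TModel, LTL.sat M 0 φ → LTL.sat M 0 ψ

/-- `M,0 ⊨ ∃q₁…∃q_m χ`, where `q₁,…,q_m` enumerate the variables in `Q`: some model
differing from `M` at most on the variables in `Q` (and with the same timeline)
satisfies `χ` at `0`. -/
def SatEx (Q : Set ℕ) (M : TModel) (χ : LTL) : Prop :=
  ∃ M' : TModel, M'.len = M.len ∧
    (∀ p ∉ Q, ∀ n, (M'.V p n ↔ M.V p n)) ∧ LTL.sat M' 0 χ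

/-- A `ρ`-model: a finite temporal model in which every variable outside `ρ` is
everywhere false. -/
def IsRhoModel (ρ : Set ℕ) (M : TModel) : Prop :=
  ∀ p ∉ ρ, ∀ n, ¬ M.V p n

/-- The word over the alphabet `A_ρ = 2^ρ` corresponding to a `ρ`-model: its `i`-th
letter is `{p ∈ ρ : i ∈ V(p)}`. -/
def encode (ρ : Set ℕ) (M : TModel) : List {a : Set ℕ // a ⊆ ρ} :=
  (List.range (M.len + 1)).map (fun i => ⟨{p | p ∈ ρ ∧ M.V p i}, fun _ hp => hp.1⟩)

/-! ### FO(<)-definability of word languages -/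

/-- Relation symbols of the word signature `σ_A`: a unary predicate for each letter
`a ∈ A` and the binary predicate `<`. -/
def WordRel (A : Type) : ℕ → Type
  | 1 => A
  | 2 => Unit
  | _ => Empty

/-- The first-order signature `σ_A` of words over `A`. -/
def wordLang (A : Type) : FirstOrder.Language := ⟨fun _ => Empty, WordRel A⟩

/-- A word regarded as a first-order `σ_A`-structure on its set of positions. -/
def wordStructure {A : Type} (w : List A) : (wordLang A).Structure (Fin w.length) where
  funMap := fun f _ => Empty.elim f
  RelMap := fun {n} r =>
    match n, r with
    | 1, a => fun v => w.get (v 0) = a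
    | 2, _ => fun v => v 0 < v 1

/-- Truth of a `σ_A`-sentence in a word. -/
def SatWord {A : Type} (w : List A) (θ : (wordLang A).Sentence) : Prop :=
  letI := wordStructure w
  (Fin w.length) ⊨ θ

/-- A language `L ⊆ A⁺` is FO(<)-definable if it is the set of nonempty words
satisfying some `σ_A`-sentence. -/
def FODefinable {A : Type} (L : Set (List A)) : Prop :=
  ∃ θ : (wordLang A).Sentence, L = {w : List A | w ≠ [] ∧ SatWord w θ}

/-!
Forgetting the variables outside `ρ` sends the models of `φ` onto `L_φ` and the countermodels of `ψ`
onto `L_¬ψ`, and a formula over `ρ` cannot distinguish models with the same word. Hence the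
interpolants are the formulas over `ρ` whose language separates `L_φ` from `L_¬ψ`, and the theorem
amounts to Kamp's theorem for words over `A_ρ`. In one direction LTL translates into first-order
logic. In the other, a first-order formula is recognized by a finite aperiodic monoid: its free
variables are stored as marks on the letters, and a quantifier is handled by the Schützenberger
product, which collects all ways of placing one mark. That a language recognized by a finite
aperiodic monoid `M` is definable in future temporal logic is shown by induction on the size of `M`
and of the alphabet (Diekert and Gastin). Choose a letter `c` whose image is not `1` and cut words
at the occurrences of `c`. The first block, the last block and the blocks in between are words over
a smaller alphabet, and the product of the sequence of middle blocks is computed in the local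
divisor of `M` at `c`, which is aperiodic and smaller than `M`.
-/

open Filter

universe u

/-! ### Aperiodic monoids -/

/-- Aperiodicity of a monoid, with an exponent that is uniform in the element; for finite monoids
this is the usual notion. -/
def IsAperiodic (M : Type*) [Monoid M] : Prop :=
  ∀ᶠ n in atTop, ∀ x : M, x ^ (n + 1) = x ^ n

namespace IsAperiodic

variable {M N : Type*} [Monoid M] [Monoid N]

theorem of_subsingleton [Subsingleton M] : IsAperiodic M :=
  Eventually.of_forall fun _ _ => Subsingleton.elim _ _

theorem of_injective (hN : IsAperiodic N) (f : M →* N) (hf : Function.Injective f) :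
    IsAperiodic M :=
  hN.mono fun n hn x => hf (by simpa only [map_pow] using hn (f x))

theorem of_surjective (hM : IsAperiodic M) (f : M →* N) (hf : Function.Surjective f) :
    IsAperiodic N :=
  hM.mono fun n hn => hf.forall.2 fun x => by simp only [← map_pow, hn x]

theorem prod (hM : IsAperiodic M) (hN : IsAperiodic N) : IsAperiodic (M × N) :=
  (hM.and hN).mono fun _ hn x => Prod.ext (hn.1 x.1) (hn.2 x.2)

theorem eq_one_of_mul_eq_one (hM : IsAperiodic M) {x y : M} (h : x * y = 1) : x = 1 := by
  obtain ⟨n, hn⟩ := hM.exists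
  calc x = x * (x ^ n * y ^ n) := by rw [pow_mul_pow_eq_one n h, mul_one]
    _ = x ^ (n + 1) * y ^ n := by rw [pow_succ', mul_assoc]
    _ = 1 := by rw [hn, pow_mul_pow_eq_one n h]

end IsAperiodic

/-! ### The Schützenberger product -/

/-- The Schützenberger product of `M` and `N`, that is, the monoid of upper triangular matrices
with diagonal entries in `M` and `N` and a subset of `M × N` as the off-diagonal entry. It computes
the set of all images of a word under splittings of the word at one of its positions. -/
@[ext]
structure SchutzenbergerProduct (M N : Type*) where
  left : M
  mid : Set (M × N)
  right : N

namespace SchutzenbergerProduct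

variable {M N : Type*}

instance [Finite M] [Finite N] : Finite (SchutzenbergerProduct M N) :=
  Finite.of_injective (fun a => (a.left, a.mid, a.right)) fun a b h => by
    simpa [SchutzenbergerProduct.ext_iff] using h

variable [Monoid M] [Monoid N]

instance : Mul (SchutzenbergerProduct M N) where
  mul a b := ⟨a.left * b.left,
    Prod.map id (· * b.right) '' a.mid ∪ Prod.map (a.left * ·) id '' b.mid, a.right * b.right⟩

instance : One (SchutzenbergerProduct M N) where
  one := ⟨1, ∅, 1⟩

theorem left_mul (a b : SchutzenbergerProduct M N) : (a * b).left = a.left * b.left := rfl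

theorem mid_mul (a b : SchutzenbergerProduct M N) : (a * b).mid =
    Prod.map id (· * b.right) '' a.mid ∪ Prod.map (a.left * ·) id '' b.mid := rfl

theorem right_mul (a b : SchutzenbergerProduct M N) : (a * b).right = a.right * b.right := rfl

theorem left_one : (1 : SchutzenbergerProduct M N).left = 1 := rfl

theorem mid_one : (1 : SchutzenbergerProduct M N).mid = ∅ := rfl

theorem right_one : (1 : SchutzenbergerProduct M N).right = 1 := rfl

instance : Monoid (SchutzenbergerProduct M N) where
  mul_assoc a b c := by
    ext1
    · exact mul_assoc _ _ _
    · simp only [mid_mul, left_mul, right_mul, Set.image_union, Set.image_image, Prod.map, id,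
        mul_assoc, Set.union_assoc]
    · exact mul_assoc _ _ _
  one_mul a := by
    ext1 <;> simp [left_mul, mid_mul, right_mul, left_one, mid_one, right_one, Prod.map]
  mul_one a := by
    ext1 <;> simp [left_mul, mid_mul, right_mul, left_one, mid_one, right_one, Prod.map]

/-- The projection onto the diagonal. -/
def diagonal : SchutzenbergerProduct M N →* M × N where
  toFun a := (a.left, a.right)
  map_one' := rfl
  map_mul' _ _ := rfl

variable {α : Type*} (f : α → M) (X : α → Set (M × N)) (g : α → N)

theorem diagonal_prod_map (w : List α) :
    diagonal (w.map fun a => mk (f a) (X a) (g a)).prod = ((w.map f).prod, (w.map g).prod) := by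
  induction w with
  | nil => rfl
  | cons a w ih =>
    rw [List.map_cons, List.prod_cons, map_mul, ih]
    simp [diagonal]

theorem mem_mid_prod_map {w : List α} {p : M × N} :
    p ∈ (w.map fun a => mk (f a) (X a) (g a)).prod.mid ↔
      ∃ (i : ℕ) (hi : i < w.length), ∃ q ∈ X w[i],
        p = (((w.take i).map f).prod * q.1, q.2 * ((w.drop (i + 1)).map g).prod) := by
  induction w generalizing p with
  | nil => simp [mid_one]
  | cons a w ih =>
    have hright : (w.map fun a => mk (f a) (X a) (g a)).prod.right = (w.map g).prod :=
      congrArg Prod.snd (diagonal_prod_map f X g w)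
    rw [List.map_cons, List.prod_cons, mid_mul, hright, Set.mem_union]
    constructor
    · rintro (⟨q, hq, rfl⟩ | ⟨_, hr, rfl⟩)
      · exact ⟨0, by simp, q, hq, by simp [Prod.map]⟩
      · obtain ⟨i, hi, q, hq, rfl⟩ := ih.1 hr
        exact ⟨i + 1, by simpa using hi, q, hq, by simp [mul_assoc]⟩
    · rintro ⟨_ | i, hi, q, hq, rfl⟩
      · exact Or.inl ⟨q, hq, by simp [Prod.map]⟩
      · exact Or.inr ⟨_, ih.2 ⟨i, by simpa using hi, q, hq, rfl⟩, by simp [mul_assoc]⟩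

theorem mem_mid_pow {a : SchutzenbergerProduct M N} {n : ℕ} {p : M × N} :
    p ∈ (a ^ n).mid ↔
      ∃ i j, i + j + 1 = n ∧ ∃ q ∈ a.mid, p = (a.left ^ i * q.1, q.2 * a.right ^ j) := by
  have h := mem_mid_prod_map (fun _ : Unit => a.left) (fun _ => a.mid) (fun _ => a.right)
    (w := List.replicate n ()) (p := p)
  simp only [List.map_replicate, List.prod_replicate, List.length_replicate, List.take_replicate,
    List.drop_replicate] at h
  refine h.trans ⟨?_, ?_⟩
  · rintro ⟨i, hi, q, hq, rfl⟩
    exact ⟨i, n - (i + 1), by omega, q, hq, by rw [min_eq_left hi.le]⟩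
  · rintro ⟨i, j, rfl, q, hq, rfl⟩
    refine ⟨i, by omega, q, hq, ?_⟩
    rw [min_eq_left (by omega), show i + j + 1 - (i + 1) = j by omega]

theorem isAperiodic (hM : IsAperiodic M) (hN : IsAperiodic N) :
    IsAperiodic (SchutzenbergerProduct M N) := by
  obtain ⟨n, hn⟩ := (hM.prod hN).exists_forall_of_atTop
  have hleft (a : SchutzenbergerProduct M N) {k : ℕ} (hk : n ≤ k) :
      a.left ^ (k + 1) = a.left ^ k := congrArg Prod.fst (hn k hk (diagonal a))
  have hright (a : SchutzenbergerProduct M N) {k : ℕ} (hk : n ≤ k) :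
      a.right ^ (k + 1) = a.right ^ k := congrArg Prod.snd (hn k hk (diagonal a))
  filter_upwards [eventually_ge_atTop (2 * n + 1)] with k hk a
  have hdiag : diagonal (a ^ (k + 1)) = diagonal (a ^ k) := by
    simpa only [map_pow] using hn k (by omega) (diagonal a)
  refine SchutzenbergerProduct.ext (congrArg Prod.fst hdiag) (Set.ext fun p => ?_)
    (congrArg Prod.snd hdiag)
  rw [mem_mid_pow, mem_mid_pow]
  -- As `i + j ≥ 2 * n`, one of the two exponents lies in the range where powers are stationary.
  constructor
  · rintro ⟨i, j, hij, q, hq, rfl⟩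
    obtain hi | hj : n + 1 ≤ i ∨ n + 1 ≤ j := by omega
    · obtain ⟨i, rfl⟩ := Nat.exists_eq_succ_of_ne_zero (by omega : i ≠ 0)
      exact ⟨i, j, by omega, q, hq, by rw [hleft a (by omega)]⟩
    · obtain ⟨j, rfl⟩ := Nat.exists_eq_succ_of_ne_zero (by omega : j ≠ 0)
      exact ⟨i, j, by omega, q, hq, by rw [hright a (by omega)]⟩
  · rintro ⟨i, j, hij, q, hq, rfl⟩
    obtain hi | hj : n ≤ i ∨ n ≤ j := by omega
    · exact ⟨i + 1, j, by omega, q, hq, by rw [hleft a hi]⟩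
    · exact ⟨i, j + 1, by omega, q, hq, by rw [hright a hj]⟩

end SchutzenbergerProduct

/-! ### Languages recognized by finite aperiodic monoids -/

/-- A language is aperiodically recognizable if membership of a word is determined by its image
under a homomorphism from the free monoid to a finite aperiodic monoid. The homomorphism is given
by its values on letters. -/
def AperiodicallyRecognizable {α : Type u} (L : Set (List α)) : Prop :=
  ∃ (M : Type u) (_ : Monoid M) (_ : Finite M) (f : α → M) (S : Set M),
    IsAperiodic M ∧ L = {w | (w.map f).prod ∈ S}

namespace AperiodicallyRecognizable

variable {α β : Type u} {K L : Set (List α)}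

theorem preimage_map {L : Set (List β)} (hL : AperiodicallyRecognizable L) (g : α → β) :
    AperiodicallyRecognizable {w | w.map g ∈ L} := by
  obtain ⟨M, _, _, f, S, hM, rfl⟩ := hL
  exact ⟨M, _, ‹_›, f ∘ g, S, hM, by simp⟩

theorem empty : AperiodicallyRecognizable (∅ : Set (List α)) :=
  ⟨PUnit, inferInstance, inferInstance, fun _ => 1, ∅, .of_subsingleton, rfl⟩

theorem compl (hL : AperiodicallyRecognizable L) : AperiodicallyRecognizable Lᶜ := by
  obtain ⟨M, _, _, f, S, hM, rfl⟩ := hL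
  exact ⟨M, _, ‹_›, f, Sᶜ, hM, rfl⟩

theorem inter (hK : AperiodicallyRecognizable K) (hL : AperiodicallyRecognizable L) :
    AperiodicallyRecognizable (K ∩ L) := by
  obtain ⟨M, _, _, f, S, hM, rfl⟩ := hK
  obtain ⟨N, _, _, g, T, hN, rfl⟩ := hL
  refine ⟨M × N, inferInstance, inferInstance, fun a => (f a, g a), S ×ˢ T, hM.prod hN, ?_⟩
  ext w
  have hfst := map_list_prod (MonoidHom.fst M N) (w.map fun a => (f a, g a))
  have hsnd := map_list_prod (MonoidHom.snd M N) (w.map fun a => (f a, g a))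
  simp_all [Function.comp_def, Set.mem_prod]

theorem exists_split {M N : Type u} [Monoid M] [Monoid N] [Finite M] [Finite N]
    (hM : IsAperiodic M) (hN : IsAperiodic N) (f : α → M) (X : α → Set (M × N)) (g : α → N)
    (S : Set (M × N)) :
    AperiodicallyRecognizable {w : List α | ∃ (i : ℕ) (hi : i < w.length), ∃ q ∈ X w[i],
      (((w.take i).map f).prod * q.1, q.2 * ((w.drop (i + 1)).map g).prod) ∈ S} := by
  refine ⟨SchutzenbergerProduct M N, inferInstance, inferInstance, fun a => ⟨f a, X a, g a⟩,
    {b | (b.mid ∩ S).Nonempty}, SchutzenbergerProduct.isAperiodic hM hN, ?_⟩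
  ext w
  simp only [Set.mem_ofPred_eq, Set.Nonempty, Set.mem_inter_iff,
    SchutzenbergerProduct.mem_mid_prod_map]
  constructor
  · rintro ⟨i, hi, q, hq, hS⟩
    exact ⟨_, ⟨i, hi, q, hq, rfl⟩, hS⟩
  · rintro ⟨_, ⟨i, hi, q, hq, rfl⟩, hS⟩
    exact ⟨i, hi, q, hq, hS⟩

theorem exists_getElem_and_drop (P : α → Prop) (hL : AperiodicallyRecognizable L) :
    AperiodicallyRecognizable
      {w : List α | ∃ (i : ℕ) (hi : i < w.length), P w[i] ∧ w.drop (i + 1) ∈ L} := by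
  obtain ⟨N, _, _, g, S, hN, rfl⟩ := hL
  have h := exists_split (M := PUnit) .of_subsingleton hN (fun _ : α => 1)
    (fun a => {q | P a ∧ q.2 = 1}) g {p | p.2 ∈ S}
  simpa [and_assoc] using h

theorem exists_mem (P : α → Prop) : AperiodicallyRecognizable {w : List α | ∃ a ∈ w, P a} := by
  have h := exists_getElem_and_drop P (empty (α := α)).compl
  simpa [List.mem_iff_getElem, exists_and_right] using h

theorem exists_getElem_lt_getElem (P Q : α → Prop) :
    AperiodicallyRecognizable {w : List α | ∃ (i j : ℕ) (hij : i < j) (hj : j < w.length),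
      P w[i] ∧ Q w[j]} := by
  convert exists_getElem_and_drop P (exists_mem Q) using 1
  ext w
  constructor
  · rintro ⟨i, j, hij, hj, hP, hQ⟩
    refine ⟨i, by omega, hP, w[j], List.mem_drop_iff_getElem.2 ⟨j - (i + 1), by omega, ?_⟩, hQ⟩
    simp only [show i + 1 + (j - (i + 1)) = j by omega]
  · rintro ⟨i, hi, hP, _, hmem, hQ⟩
    obtain ⟨k, hk, rfl⟩ := List.mem_drop_iff_getElem.1 hmem
    exact ⟨i, i + 1 + k, by omega, by omega, hP, hQ⟩

theorem exists_set {L : Set (List β)} (hL : AperiodicallyRecognizable L) (g h : α → β) :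
    AperiodicallyRecognizable
      {w : List α | ∃ (i : ℕ) (hi : i < w.length), (w.map g).set i (h w[i]) ∈ L} := by
  obtain ⟨M, _, _, f, S, hM, rfl⟩ := hL
  convert exists_split hM hM (f ∘ g) (fun a => {(f (h a), 1)}) (f ∘ g) {p | p.1 * p.2 ∈ S} using 1
  ext w
  refine exists_congr fun i => exists_congr fun hi => ?_
  simp [List.set_eq_take_append_cons_drop, hi, List.map_take, List.map_drop, mul_assoc]

end AperiodicallyRecognizable

/-! ### First-order formulas recognized on marked words -/

section FirstOrder

variable {A : Type} {n : ℕ}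

local instance (w : List A) : (wordLang A).Structure (Fin w.length) := wordStructure w

/-- The word `w` with its letter at position `i` extended by the predicate telling which entries of
the tuple of positions `v` are equal to `i`. It encodes the valuation `v` in a single word. -/
def markedWord (w : List A) (v : Fin n → Fin w.length) : List (A × (Fin n → Prop)) :=
  List.ofFn fun i => (w.get i, fun j => v j = i)

theorem length_markedWord (w : List A) (v : Fin n → Fin w.length) :
    (markedWord w v).length = w.length := List.length_ofFn

theorem getElem_markedWord (w : List A) (v : Fin n → Fin w.length) {i : ℕ}
    (hi : i < (markedWord w v).length) :
    (markedWord w v)[i] = (w[i]'(by rwa [length_markedWord] at hi), fun j => (v j : ℕ) = i) := by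
  simp [markedWord, Fin.ext_iff]

theorem exists_mem_markedWord (w : List A) (v : Fin n → Fin w.length)
    {P : A × (Fin n → Prop) → Prop} :
    (∃ a ∈ markedWord w v, P a) ↔ ∃ i, P (w.get i, fun j => v j = i) := by
  simp [markedWord, List.mem_ofFn]

theorem markedWord_snoc (w : List A) (v : Fin n → Fin w.length) (x : Fin w.length) :
    markedWord w (Fin.snoc v x) =
      ((markedWord w v).map fun a => (a.1, Fin.snoc a.2 False)).set x
        (w.get x, Fin.snoc (fun j => v j = x) True) := by
  refine List.ext_getElem (by simp [length_markedWord]) fun i _ _ => ?_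
  rw [List.getElem_set, getElem_markedWord]
  split_ifs with h
  · subst h
    refine Prod.ext rfl (funext fun j => ?_)
    induction j using Fin.lastCases <;> simp [Fin.ext_iff]
  · rw [List.getElem_map, getElem_markedWord]
    refine Prod.ext rfl (funext fun j => ?_)
    induction j using Fin.lastCases <;> simp [h]

theorem term_eq_var (t : (wordLang A).Term (Empty ⊕ Fin n)) :
    ∃ i, t = Language.Term.var (Sum.inr i) := by
  rcases t with (x | i) | ⟨f, _⟩
  · exact x.elim
  · exact ⟨i, rfl⟩
  · exact Empty.elim f

/-- A first-order formula is recognizable if the marked words encoding its satisfying valuations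
are cut out, among all marked words, by an aperiodically recognizable language. -/
def IsRecognizable (θ : (wordLang A).BoundedFormula Empty n) : Prop :=
  ∃ L, AperiodicallyRecognizable L ∧
    ∀ (w : List A) (v : Fin n → Fin w.length), markedWord w v ∈ L ↔ θ.Realize default v

namespace IsRecognizable

theorem equal (t₁ t₂ : (wordLang A).Term (Empty ⊕ Fin n)) :
    IsRecognizable (.equal t₁ t₂) := by
  obtain ⟨i, rfl⟩ := term_eq_var t₁
  obtain ⟨j, rfl⟩ := term_eq_var t₂
  refine ⟨_, .exists_mem fun a => a.2 i ∧ a.2 j, fun w v => ?_⟩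
  rw [Set.mem_ofPred_eq, exists_mem_markedWord]
  simp [Language.BoundedFormula.Realize, eq_comm]

theorem letter (a : A) (ts : Fin 1 → (wordLang A).Term (Empty ⊕ Fin n)) :
    IsRecognizable (.rel (l := 1) a ts) := by
  obtain ⟨i, hi⟩ := term_eq_var (ts 0)
  refine ⟨_, .exists_mem fun b => b.2 i ∧ b.1 = a, fun w v => ?_⟩
  have hrealize : (Language.BoundedFormula.rel (l := 1) a ts).Realize default v ↔
      w.get ((ts 0).realize (Sum.elim default v)) = a := Iff.rfl
  rw [Set.mem_ofPred_eq, exists_mem_markedWord, hrealize, hi]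
  simp

theorem lt (ts : Fin 2 → (wordLang A).Term (Empty ⊕ Fin n)) :
    IsRecognizable (.rel (l := 2) () ts) := by
  obtain ⟨i, hi⟩ := term_eq_var (ts 0)
  obtain ⟨j, hj⟩ := term_eq_var (ts 1)
  refine ⟨_, .exists_getElem_lt_getElem (·.2 i) (·.2 j), fun w v => ?_⟩
  have hrealize : (Language.BoundedFormula.rel (l := 2) () ts).Realize default v ↔
      (ts 0).realize (Sum.elim default v) < (ts 1).realize (Sum.elim default v) := Iff.rfl
  rw [hrealize, hi, hj]
  simp [getElem_markedWord, length_markedWord]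

theorem rel {l : ℕ} (R : (wordLang A).Relations l)
    (ts : Fin l → (wordLang A).Term (Empty ⊕ Fin n)) : IsRecognizable (.rel R ts) :=
  match l, R, ts with
  | 1, a, ts => letter a ts
  | 2, (), ts => lt ts

theorem imp {θ η : (wordLang A).BoundedFormula Empty n} (hθ : IsRecognizable θ)
    (hη : IsRecognizable η) : IsRecognizable (θ.imp η) := by
  obtain ⟨K, hK, hθ⟩ := hθ
  obtain ⟨L, hL, hη⟩ := hη
  exact ⟨_, (hK.inter hL.compl).compl, fun w v => by
    simp [Language.BoundedFormula.realize_imp, ← hθ, ← hη]⟩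

theorem all {θ : (wordLang A).BoundedFormula Empty (n + 1)} (hθ : IsRecognizable θ) :
    IsRecognizable θ.all := by
  obtain ⟨L, hL, hθ⟩ := hθ
  refine ⟨_, (hL.compl.exists_set (fun a : A × (Fin n → Prop) => (a.1, Fin.snoc a.2 False))
    fun a => (a.1, Fin.snoc a.2 True)).compl, fun w v => ?_⟩
  simp only [Language.BoundedFormula.realize_all, ← hθ, markedWord_snoc]
  simp [Fin.forall_iff, length_markedWord, getElem_markedWord, Fin.ext_iff]

end IsRecognizable

theorem isRecognizable (θ : (wordLang A).BoundedFormula Empty n) : IsRecognizable θ := by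
  induction θ with
  | falsum => exact ⟨∅, .empty, fun _ _ => Iff.rfl⟩
  | equal t₁ t₂ => exact .equal t₁ t₂
  | rel R ts => exact .rel R ts
  | imp _ _ hθ hη => exact hθ.imp hη
  | all _ hθ => exact hθ.all

theorem aperiodicallyRecognizable_satWord (θ : (wordLang A).Sentence) :
    AperiodicallyRecognizable {w | SatWord w θ} := by
  obtain ⟨L, hL, hθ⟩ := isRecognizable θ
  convert hL.preimage_map fun a => (a, default) using 1
  ext w
  have hmarked : markedWord w default = w.map fun a => (a, default) :=
    List.ext_getElem (by simp [length_markedWord]) fun i _ _ => by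
      rw [getElem_markedWord, List.getElem_map]
      exact Prod.ext rfl (funext fun j => j.elim0)
  rw [Set.mem_ofPred_eq, Set.mem_ofPred_eq, ← hmarked, hθ]
  rfl

end FirstOrder

/-! ### Temporally definable languages -/

/-- Strict until on words: some proper suffix, possibly empty, belongs to `L`, and all nonempty
suffixes strictly in between belong to `K`. -/
def StrictUntil {α : Type*} (K L : Set (List α)) : List α → Prop
  | [] => False
  | _ :: w => w ∈ L ∨ w ∈ K ∧ StrictUntil K L w

/-- The languages definable in the future fragment of temporal logic, evaluated at the first
letter of a word. -/
inductive TemporallyDefinable {α : Type*} : Set (List α) → Prop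
  | empty : TemporallyDefinable ∅
  | head (a : α) : TemporallyDefinable {w | w.head? = some a}
  | compl {L : Set (List α)} : TemporallyDefinable L → TemporallyDefinable Lᶜ
  | inter {K L : Set (List α)} :
      TemporallyDefinable K → TemporallyDefinable L → TemporallyDefinable (K ∩ L)
  | strictUntil {K L : Set (List α)} : TemporallyDefinable K → TemporallyDefinable L →
      TemporallyDefinable {w | StrictUntil K L w}

/-- The language of all words over the letters in `B`. -/
def wordsOver {α : Type*} (B : Finset α) : Set (List α) := {w | ∀ a ∈ w, a ∈ B}

/-- The longest prefix of `w` without the letter `c`. -/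
def firstBlock {α : Type*} [DecidableEq α] (c : α) (w : List α) : List α :=
  w.takeWhile (· ≠ c)

/-- The longest suffix of a word without the letter `c`. -/
def lastBlock {α : Type*} [DecidableEq α] (c : α) : List α → List α
  | [] => []
  | a :: w => if c ∈ a :: w then lastBlock c w else a :: w

/-- The products of the images under `f` of the blocks of a word that are terminated by the
letter `c`. The last block is not listed, so that there is one entry for each occurrence of `c`. -/
def blockProds {α M : Type*} [DecidableEq α] [Monoid M] (c : α) (f : α → M) : List α → List M
  | [] => []
  | a :: w => if a = c then 1 :: blockProds c f w else (blockProds c f w).modifyHead (f a * ·)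

section Blocks

variable {α M : Type*} [DecidableEq α] [Monoid M] {B : Finset α} {c : α} {f : α → M} {w : List α}

theorem mem_wordsOver_erase : w ∈ wordsOver (B.erase c) ↔ w ∈ wordsOver B ∧ c ∉ w := by
  simp only [wordsOver, Set.mem_ofPred_eq, Finset.mem_erase]
  grind

theorem firstBlock_mem_wordsOver_erase (hw : w ∈ wordsOver B) :
    firstBlock c w ∈ wordsOver (B.erase c) := fun a ha =>
  Finset.mem_erase.2 ⟨by simpa using List.mem_takeWhile_imp ha,
    hw a ((List.takeWhile_sublist _).subset ha)⟩

theorem lastBlock_mem_wordsOver_erase (hw : w ∈ wordsOver B) :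
    lastBlock c w ∈ wordsOver (B.erase c) := by
  induction w with
  | nil => simp [lastBlock, wordsOver]
  | cons a w ih =>
    rw [lastBlock]
    split_ifs with hc
    · exact ih fun b hb => hw b (List.mem_cons_of_mem a hb)
    · exact mem_wordsOver_erase.2 ⟨hw, hc⟩

theorem head?_blockProds :
    (blockProds c f w).head? = if c ∈ w then some ((firstBlock c w).map f).prod else none := by
  induction w with
  | nil => rfl
  | cons a w ih =>
    by_cases ha : a = c
    · simp [blockProds, firstBlock, ha]
    · by_cases hc : c ∈ w <;>
        simp [blockProds, firstBlock, ha, Ne.symm ha, hc, List.head?_modifyHead, ih]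

theorem blockProds_eq_nil_iff : blockProds c f w = [] ↔ c ∉ w := by
  simp [← List.head?_eq_none_iff, head?_blockProds]

theorem lastBlock_of_notMem (hc : c ∉ w) : lastBlock c w = w := by
  cases w with
  | nil => rfl
  | cons a w => rw [lastBlock, if_neg hc]

end Blocks

namespace TemporallyDefinable

variable {α : Type*} {K L : Set (List α)}

theorem univ : TemporallyDefinable (Set.univ : Set (List α)) := by
  simpa using (empty (α := α)).compl

theorem union (hK : TemporallyDefinable K) (hL : TemporallyDefinable L) :
    TemporallyDefinable (K ∪ L) := by
  simpa [Set.compl_inter] using (hK.compl.inter hL.compl).compl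

theorem biUnion {ι : Type*} {s : Set ι} (hs : s.Finite) {L : ι → Set (List α)}
    (hL : ∀ i ∈ s, TemporallyDefinable (L i)) : TemporallyDefinable (⋃ i ∈ s, L i) := by
  induction s, hs using Set.Finite.induction_on with
  | empty => simpa using empty
  | insert _ _ ih =>
    rw [Set.biUnion_insert]
    exact (hL _ (Set.mem_insert _ _)).union (ih fun i hi => hL i (Set.mem_insert_of_mem _ hi))

theorem iUnion {ι : Type*} [Finite ι] {L : ι → Set (List α)} (hL : ∀ i, TemporallyDefinable (L i)) :
    TemporallyDefinable (⋃ i, L i) := by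
  simpa using biUnion Set.finite_univ fun i _ => hL i

theorem nonstrictUntil (hK : TemporallyDefinable K) (hL : TemporallyDefinable L) :
    TemporallyDefinable {w | w ∈ L ∨ w ∈ K ∧ StrictUntil K L w} :=
  hL.union (hK.inter (hK.strictUntil hL))

theorem cons (a : α) (hL : TemporallyDefinable L) : TemporallyDefinable (List.cons a '' L) := by
  convert (head a).inter (empty.strictUntil hL) using 1
  ext (_ | ⟨b, w⟩) <;> simp [StrictUntil, eq_comm, and_comm]

theorem nil : TemporallyDefinable ({[]} : Set (List α)) := by
  convert (empty.strictUntil univ).compl using 1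
  ext (_ | ⟨a, w⟩) <;> simp [StrictUntil]

theorem mem (c : α) : TemporallyDefinable {w : List α | c ∈ w} := by
  convert univ.nonstrictUntil (head c) using 1
  ext w
  induction w with
  | nil => simp [StrictUntil]
  | cons a w ih => simp_all [StrictUntil, eq_comm]

protected theorem wordsOver (B : Finset α) : TemporallyDefinable (wordsOver B) := by
  have hhead : TemporallyDefinable (⋃ a ∈ (B : Set α), {w : List α | w.head? = some a}) :=
    biUnion B.finite_toSet fun a _ => head a
  convert hhead.nonstrictUntil nil using 1
  ext w
  induction w with
  | nil => simp [wordsOver]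
  | cons a w ih => simp_all [wordsOver, StrictUntil]

variable [DecidableEq α]

theorem preimage_firstBlock (c : α) (hL : TemporallyDefinable L) :
    TemporallyDefinable (firstBlock c ⁻¹' L) := by
  induction hL with
  | empty => exact empty
  | head a =>
    convert (head c).compl.inter (head a) using 1
    ext (_ | ⟨b, w⟩)
    · simp [firstBlock]
    · by_cases hb : b = c <;> simp [firstBlock, hb]
  | compl _ ih => exact ih.compl
  | inter _ _ ihK ihL => exact ihK.inter ihL
  | strictUntil _ _ ihK ihL =>
    convert (head c).compl.inter ((ihK.inter (head c).compl).strictUntil ihL) using 1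
    ext w
    induction w with
    | nil => simp [firstBlock, StrictUntil]
    | cons a w ih =>
      by_cases ha : a = c <;> simp_all [firstBlock, StrictUntil, and_assoc]

theorem preimage_lastBlock (c : α) (hL : TemporallyDefinable L) :
    TemporallyDefinable (lastBlock c ⁻¹' L) := by
  convert (mem c).nonstrictUntil ((mem c).compl.inter hL) using 1
  ext w
  induction w with
  | nil => simp [lastBlock]
  | cons a w ih =>
    by_cases hc : c ∈ a :: w <;> simp_all [lastBlock, StrictUntil]

theorem wordsOver_inter_preimage_blockProds {M : Type*} [Monoid M] {B : Finset α} {c : α}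
    {f : α → M}
    (hprod : ∀ m, TemporallyDefinable {w | w ∈ wordsOver (B.erase c) ∧ (w.map f).prod = m})
    {L : Set (List M)} (hL : TemporallyDefinable L) :
    TemporallyDefinable (wordsOver B ∩ blockProds c f ⁻¹' L) := by
  induction hL with
  | empty => simpa using empty
  | head m =>
    convert (TemporallyDefinable.wordsOver B).inter
      ((mem c).inter ((hprod m).preimage_firstBlock c)) using 1
    ext w
    refine and_congr_right fun hw => ?_
    have hblock : firstBlock c w ∈ wordsOver (B.erase c) := firstBlock_mem_wordsOver_erase hw
    by_cases hc : c ∈ w <;> simp [head?_blockProds, hc, hblock]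
  | compl _ ih =>
    convert (TemporallyDefinable.wordsOver B).inter ih.compl using 1
    exact Set.ext fun w => and_congr_right fun hw => by simp [hw]
  | inter _ _ ihK ihL =>
    rw [Set.preimage_inter, Set.inter_inter_distrib_left]
    exact ihK.inter ihL
  | @strictUntil K L _ _ ihK ihL =>
    convert (TemporallyDefinable.wordsOver B).inter
      (((head c).compl.union (ihK.cons c)).nonstrictUntil (ihL.cons c)) using 1
    ext w
    refine and_congr_right fun hw => ?_
    induction w with
    | nil => simp [blockProds, StrictUntil]
    | cons a w ih =>
      specialize ih fun b hb => hw b (List.mem_cons_of_mem a hb)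
      have hmem : w ∈ wordsOver B := fun b hb => hw b (List.mem_cons_of_mem a hb)
      by_cases ha : a = c
      · simp_all [blockProds, StrictUntil]
      · have hmodify (l : List M) :
            StrictUntil K L (l.modifyHead (f a * ·)) ↔ StrictUntil K L l := by cases l <;> rfl
        simp_all [blockProds, StrictUntil, Ne.symm ha]

end TemporallyDefinable

/-! ### Local divisors -/

section LocalDivisor

variable {M : Type u} [Monoid M] (c : M)

/-- The elements `z` with `z * c` in the right ideal `c * M`. The local divisor at `c` is a
quotient of this submonoid. -/
def localDivisorDomain : Submonoid M where
  carrier := {z | ∃ y, z * c = c * y}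
  one_mem' := ⟨1, by simp⟩
  mul_mem' := by
    rintro a b ⟨y, hy⟩ ⟨z, hz⟩
    exact ⟨y * z, by rw [mul_assoc, hz, ← mul_assoc, hy, mul_assoc]⟩

/-- The congruence identifying `z` and `z'` when `z * c = z' * c`. -/
def localDivisorCon : Con (localDivisorDomain c) where
  r z z' := (z : M) * c = z' * c
  iseqv := ⟨fun _ => rfl, Eq.symm, Eq.trans⟩
  mul' := by
    rintro ⟨a, ha⟩ ⟨a', ha'⟩ ⟨b, y, hb⟩ ⟨b', hb'⟩ (h : a * c = a' * c) (h' : b * c = b' * c)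
    change a * b * c = a' * b' * c
    rw [mul_assoc, mul_assoc, ← h', hb, ← mul_assoc, h, mul_assoc]

/-- The local divisor of `M` at `c`, that is, the set `c * M ∩ M * c` with the multiplication
`(z * c) ∘ (c * y) = z * c * y`. It is realized as a quotient of `localDivisorDomain c`, where the
class of `z` stands for `z * c`. -/
abbrev LocalDivisor : Type u := (localDivisorCon c).Quotient

namespace LocalDivisor

variable {c}

/-- The element of `c * M ∩ M * c` represented by an element of the local divisor. -/
def val (x : LocalDivisor c) : M :=
  Con.liftOn x (fun z => (z : M) * c) fun _ _ h => h

variable (c) in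
/-- The element of the local divisor representing `c * x * c`. -/
def letter (x : M) : LocalDivisor c :=
  ((⟨c * x, x * c, mul_assoc c x c⟩ : localDivisorDomain c) : LocalDivisor c)

theorem val_injective : Function.Injective (val (c := c)) := by
  intro x y
  exact Con.induction_on₂ x y fun _ _ h => (Con.eq _).2 h

theorem val_one : val (1 : LocalDivisor c) = c :=
  one_mul c

theorem val_letter_mul (x : M) (y : LocalDivisor c) : (letter c x * y).val = c * x * y.val := by
  induction y using Con.induction_on with
  | H z => exact mul_assoc (c * x) (z : M) c

theorem exists_val_eq_mul (x : LocalDivisor c) : ∃ y, x.val = c * y := by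
  induction x using Con.induction_on with
  | H z => exact z.2

instance [Finite M] : Finite (LocalDivisor c) := .of_injective _ val_injective

theorem isAperiodic (hM : IsAperiodic M) : IsAperiodic (LocalDivisor c) :=
  (hM.of_injective (localDivisorDomain c).subtype Subtype.val_injective).of_surjective
    (localDivisorCon c).mk' Con.mk'_surjective

theorem card_lt [Finite M] (hM : IsAperiodic M) (hc : c ≠ 1) :
    Nat.card (LocalDivisor c) < Nat.card M := by
  have hone : (1 : M) ∉ Set.range (val (c := c)) := by
    rintro ⟨x, hx⟩
    obtain ⟨y, hy⟩ := x.exists_val_eq_mul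
    exact hc (hM.eq_one_of_mul_eq_one (hy.symm.trans hx))
  rw [← Nat.card_range_of_injective val_injective]
  exact Finite.card_subtype_lt hone

end LocalDivisor

open LocalDivisor

theorem prod_map_of_blockProds_eq_cons {α : Type*} [DecidableEq α] {a : α} {f : α → M}
    {w : List α} {t : M} {ts : List M} (h : blockProds a f w = t :: ts) :
    (w.map f).prod =
      t * (ts.map (letter (f a))).prod.val * ((lastBlock a w).map f).prod := by
  induction w generalizing t ts with
  | nil => simp [blockProds] at h
  | cons b w ih =>
    have hmem : a ∈ b :: w := by
      by_contra hmem
      simp [blockProds_eq_nil_iff.2 hmem] at h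
    rw [lastBlock, if_pos hmem, List.map_cons, List.prod_cons]
    by_cases hb : b = a
    · subst hb
      obtain ⟨rfl, rfl⟩ : 1 = t ∧ blockProds b f w = ts := by simpa [blockProds] using h
      rcases hw : blockProds b f w with _ | ⟨t, ts⟩
      · simp [val_one, lastBlock_of_notMem (blockProds_eq_nil_iff.1 hw)]
      · simp [ih hw, val_letter_mul, mul_assoc]
    · rcases hw : blockProds a f w with _ | ⟨s, ss⟩
      · simp [blockProds, hb, hw] at h
      · obtain ⟨rfl, rfl⟩ : f b * s = t ∧ ss = ts := by simpa [blockProds, hb, hw] using h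
        simp [ih hw, mul_assoc]

end LocalDivisor

/-! ### Aperiodically recognizable languages are temporally definable -/

theorem TemporallyDefinable.wordsOver_inter_prod_of_map_eq_one {α M : Type*} [Monoid M]
    {B : Finset α} {f : α → M} (hf : ∀ a ∈ B, f a = 1) (m : M) :
    TemporallyDefinable {w | w ∈ wordsOver B ∧ (w.map f).prod = m} := by
  have hprod {w : List α} (hw : w ∈ wordsOver B) : (w.map f).prod = 1 :=
    List.prod_eq_one fun x hx => by
      obtain ⟨a, ha, rfl⟩ := List.mem_map.1 hx
      exact hf a (hw a ha)
  by_cases hm : m = 1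
  · convert TemporallyDefinable.wordsOver B using 1
    exact Set.ext fun w => and_iff_left_of_imp fun hw => (hprod hw).trans hm.symm
  · convert TemporallyDefinable.empty using 1
    exact Set.eq_empty_of_forall_notMem fun w hw => hm (hw.2.symm.trans (hprod hw.1))

theorem wordsOver_inter_prod_eq {α : Type*} {M : Type u} [DecidableEq α] [Monoid M] (B : Finset α)
    (c : α) (f : α → M) (m : M) :
    {w | w ∈ wordsOver B ∧ (w.map f).prod = m} =
      {w | w ∈ wordsOver (B.erase c) ∧ (w.map f).prod = m} ∪
        ⋃ p : {p : M × LocalDivisor (f c) × M // p.1 * p.2.1.val * p.2.2 = m},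
          wordsOver B ∩ blockProds c f ⁻¹'
              (List.cons p.1.1 '' {ts | (ts.map (LocalDivisor.letter (f c))).prod = p.1.2.1}) ∩
            lastBlock c ⁻¹' {w | w ∈ wordsOver (B.erase c) ∧ (w.map f).prod = p.1.2.2} := by
  ext w
  simp only [Set.mem_union, Set.mem_iUnion, Set.mem_inter_iff, Set.mem_preimage, Set.mem_image,
    Set.mem_ofPred_eq]
  constructor
  · rintro ⟨hw, rfl⟩
    rcases ht : blockProds c f w with _ | ⟨t, ts⟩
    · exact .inl ⟨mem_wordsOver_erase.2 ⟨hw, blockProds_eq_nil_iff.1 ht⟩, rfl⟩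
    · exact .inr ⟨⟨(t, _, _), (prod_map_of_blockProds_eq_cons ht).symm⟩, ⟨hw, ts, rfl, rfl⟩,
        lastBlock_mem_wordsOver_erase hw, rfl⟩
  · rintro (⟨hw, rfl⟩ | ⟨⟨⟨t, y, z⟩, rfl⟩, ⟨hw, ts, rfl, ht⟩, -, rfl⟩)
    · exact ⟨(mem_wordsOver_erase.1 hw).1, rfl⟩
    · exact ⟨hw, prod_map_of_blockProds_eq_cons ht.symm⟩

theorem TemporallyDefinable.prod_eq {α M : Type u} [Finite α] [Monoid M] [Finite M]
    (hM : IsAperiodic M) (f : α → M) (m : M) :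
    TemporallyDefinable {w | (w.map f).prod = m} := by
  classical
  induction hn : Nat.card M using Nat.strong_induction_on generalizing α M with
  | _ n ihM =>
  subst hn
  suffices h : ∀ (B : Finset α) (m : M),
      TemporallyDefinable {w | w ∈ wordsOver B ∧ (w.map f).prod = m} by
    have := Fintype.ofFinite α
    simpa [wordsOver] using h Finset.univ m
  intro B
  induction B using Finset.strongInduction with
  | H B ihB =>
  intro m
  by_cases! hf : ∀ a ∈ B, f a = 1
  · exact .wordsOver_inter_prod_of_map_eq_one hf m
  obtain ⟨c, hcB, hc⟩ := hf
  have hblock := ihB _ (Finset.erase_ssubset hcB)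
  have hdivisor (x : LocalDivisor (f c)) :
      TemporallyDefinable {ts | (ts.map (LocalDivisor.letter (f c))).prod = x} :=
    ihM _ (LocalDivisor.card_lt hM hc) (LocalDivisor.isAperiodic hM) _ x rfl
  rw [wordsOver_inter_prod_eq B c]
  exact (hblock m).union (.iUnion fun p =>
    (wordsOver_inter_preimage_blockProds hblock ((hdivisor _).cons _)).inter
      ((hblock _).preimage_lastBlock c))

theorem AperiodicallyRecognizable.temporallyDefinable {α : Type u} [Finite α] {L : Set (List α)}
    (hL : AperiodicallyRecognizable L) : TemporallyDefinable L := by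
  obtain ⟨M, _, _, f, S, hM, rfl⟩ := hL
  convert TemporallyDefinable.biUnion S.toFinite fun m _ => .prod_eq hM f m using 1
  ext w
  simp

/-! ### LTL over encoded words -/

namespace LTL

variable {χ κ : LTL} {M N : TModel} {n : ℕ}

theorem vars_finite (χ : LTL) : χ.vars.Finite := by
  induction χ with
  | top => exact Set.finite_empty
  | var p => exact Set.finite_singleton p
  | and _ _ ih₁ ih₂ => exact ih₁.union ih₂
  | not _ ih => exact ih
  | next _ ih => exact ih
  | ev _ ih => exact ih
  | untl _ _ ih₁ ih₂ => exact ih₁.union ih₂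

theorem sat_congr (hlen : M.len = N.len)
    (hV : ∀ p ∈ χ.vars, ∀ n ≤ M.len, (M.V p n ↔ N.V p n)) (hn : n ≤ M.len) :
    sat M n χ ↔ sat N n χ := by
  induction χ generalizing n with
  | top => rfl
  | var p => exact hV p rfl n hn
  | and _ _ ih₁ ih₂ =>
    exact and_congr (ih₁ (fun p hp => hV p (.inl hp)) hn) (ih₂ (fun p hp => hV p (.inr hp)) hn)
  | not _ ih => exact not_congr (ih hV hn)
  | next _ ih =>
    simp only [sat, ← hlen]
    exact and_congr_right fun h => ih hV h
  | ev _ ih =>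
    simp only [sat, ← hlen]
    exact exists_congr fun m => and_congr_right fun _ => and_congr_right fun hm => ih hV hm
  | untl _ _ ih₁ ih₂ =>
    simp only [sat, ← hlen]
    refine exists_congr fun m => and_congr_right fun _ => and_congr_right fun hm => ?_
    exact and_congr (ih₁ (fun p hp => hV p (.inl hp)) hm) (forall_congr' fun k =>
      imp_congr_right fun _ => imp_congr_right fun hk =>
        ih₂ (fun p hp => hV p (.inr hp)) (hk.le.trans hm))

/-- Disjunction, expressed by the primitive connectives. -/
def or (χ κ : LTL) : LTL := .not (.and (.not χ) (.not κ))

theorem sat_or : sat M n (χ.or κ) ↔ sat M n χ ∨ sat M n κ := by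
  simp only [or, sat]
  tauto

end LTL

section Encode

variable {ρ : Set ℕ} {M N : TModel} {n : ℕ}

theorem length_encode : (encode ρ M).length = M.len + 1 := by simp [encode]

theorem coe_getElem_encode (hn : n < (encode ρ M).length) :
    ((encode ρ M)[n] : Set ℕ) = {p | p ∈ ρ ∧ M.V p n} := by simp [encode]

theorem encode_eq_encode_iff : encode ρ M = encode ρ N ↔
    M.len = N.len ∧ ∀ p ∈ ρ, ∀ n ≤ M.len, (M.V p n ↔ N.V p n) := by
  simp only [List.ext_getElem_iff, length_encode, Subtype.ext_iff, coe_getElem_encode,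
    Set.ext_iff, Set.mem_ofPred_eq, and_congr_right_iff, Nat.add_right_cancel_iff, Nat.lt_succ_iff]
  grind

theorem sat_iff_of_encode_eq {χ : LTL} (hχ : χ.vars ⊆ ρ) (h : encode ρ M = encode ρ N)
    (hn : n ≤ M.len) : LTL.sat M n χ ↔ LTL.sat N n χ := by
  obtain ⟨hlen, hV⟩ := encode_eq_encode_iff.1 h
  exact LTL.sat_congr hlen (fun p hp => hV p (hχ hp)) hn

theorem range_encode : Set.range (encode ρ) = {w | w ≠ []} := by
  ext w
  constructor
  · rintro ⟨M, rfl⟩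
    exact List.ne_nil_of_length_pos (by simp [length_encode])
  · intro hw
    have hlen : w.length - 1 + 1 = w.length := Nat.sub_add_cancel (List.length_pos_iff.2 hw)
    refine ⟨⟨w.length - 1, fun p n => ∃ h : n < w.length, p ∈ w[n].1⟩, ?_⟩
    refine List.ext_getElem (by simpa [length_encode] using hlen) fun i _ hi => Subtype.ext ?_
    ext p
    simpa [coe_getElem_encode, hi] using @w[i].2 p

theorem setOf_isRhoModel_satEx_eq_image_encode (χ : LTL) :
    {w | ∃ M : TModel, IsRhoModel ρ M ∧ SatEx (χ.vars \ ρ) M χ ∧ w = encode ρ M} =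
      encode ρ '' {M | LTL.sat M 0 χ} := by
  ext w
  constructor
  · rintro ⟨M, -, ⟨N, hlen, hV, hN⟩, rfl⟩
    exact ⟨N, hN, encode_eq_encode_iff.2 ⟨hlen, fun p hp n _ => hV p (fun h => h.2 hp) n⟩⟩
  · rintro ⟨M, hM, rfl⟩
    let N : TModel := ⟨M.len, fun p n => (p ∈ χ.vars ∨ p ∈ ρ) ∧ M.V p n⟩
    refine ⟨⟨M.len, fun p n => p ∈ ρ ∧ M.V p n⟩, fun p hp n h => hp h.1, ⟨N, rfl, ?_, ?_⟩, ?_⟩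
    · simp only [N, Set.mem_sdiff]
      tauto
    · have hNV : ∀ p ∈ χ.vars, ∀ n ≤ M.len, (M.V p n ↔ N.V p n) := fun p hp n _ => by simp [N, hp]
      exact (LTL.sat_congr (M := M) (N := N) rfl hNV M.len.zero_le).1 hM
    · exact encode_eq_encode_iff.2 ⟨rfl, fun p hp n _ => by simp [hp]⟩

end Encode

/-! ### From temporally definable languages to LTL -/

theorem strictUntil_drop_iff {α : Type*} {K L : Set (List α)} {w : List α} {n : ℕ} :
    StrictUntil K L (w.drop n) ↔
      ∃ m, n < m ∧ m ≤ w.length ∧ w.drop m ∈ L ∧ ∀ k, n < k → k < m → w.drop k ∈ K := by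
  by_cases hn : n < w.length
  · rw [List.drop_eq_getElem_cons hn, StrictUntil, strictUntil_drop_iff (n := n + 1)]
    constructor
    · rintro (hL | ⟨hK, m, hnm, hm, hL, hbetween⟩)
      · exact ⟨n + 1, by omega, hn, hL, fun k _ _ => by omega⟩
      · refine ⟨m, by omega, hm, hL, fun k hk hkm => ?_⟩
        obtain rfl | hk := (Nat.succ_le_of_lt hk).eq_or_lt
        exacts [hK, hbetween k hk hkm]
    · rintro ⟨m, hnm, hm, hL, hbetween⟩
      obtain rfl | hnm := (Nat.succ_le_of_lt hnm).eq_or_lt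
      · exact .inl hL
      · exact .inr ⟨hbetween _ (by omega) hnm, m, hnm, hm, hL,
          fun k hk => hbetween k (by omega)⟩
  · rw [List.drop_eq_nil_of_le (by omega)]
    refine iff_of_false id ?_
    rintro ⟨m, hnm, hm, -⟩
    omega
termination_by w.length - n

theorem strictUntil_drop_encode_iff {ρ : Set ℕ} {K L : Set (List {a : Set ℕ // a ⊆ ρ})}
    {M : TModel} {n : ℕ} (hn : n ≤ M.len) :
    StrictUntil K L ((encode ρ M).drop n) ↔
      (∃ m, n < m ∧ m ≤ M.len ∧ (encode ρ M).drop m ∈ L ∧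
        ∀ k, n < k → k < m → (encode ρ M).drop k ∈ K) ∨
      [] ∈ L ∧ ∀ k, n < k → k ≤ M.len → (encode ρ M).drop k ∈ K := by
  have hnil : (encode ρ M).drop (M.len + 1) = [] := List.drop_eq_nil_of_le length_encode.le
  rw [strictUntil_drop_iff, length_encode]
  constructor
  · rintro ⟨m, hnm, hm, hL, hK⟩
    obtain rfl | hm := hm.eq_or_lt
    · exact .inr ⟨hnil ▸ hL, fun k hk hkm => hK k hk (by omega)⟩
    · exact .inl ⟨m, hnm, by omega, hL, hK⟩
  · rintro (⟨m, hnm, hm, hL, hK⟩ | ⟨hL, hK⟩)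
    · exact ⟨m, hnm, by omega, hL, hK⟩
    · exact ⟨M.len + 1, by omega, le_rfl, hnil.symm ▸ hL, fun k hk hkm => hK k hk (by omega)⟩

/-- The formula `χ` over the variables `ρ` holds at exactly those time points at which the remaining
word belongs to `L`. -/
structure Expresses (ρ : Set ℕ) (χ : LTL) (L : Set (List {a : Set ℕ // a ⊆ ρ})) : Prop where
  vars_subset : χ.vars ⊆ ρ
  sat_iff : ∀ M n, n ≤ M.len → (LTL.sat M n χ ↔ (encode ρ M).drop n ∈ L)

namespace Expresses

variable {ρ : Set ℕ} {χ κ : LTL} {K L : Set (List {a : Set ℕ // a ⊆ ρ})}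

theorem empty : Expresses ρ (.not .top) ∅ where
  vars_subset := Set.empty_subset ρ
  sat_iff M n _ := by simp [LTL.sat]

theorem compl (h : Expresses ρ χ L) : Expresses ρ χ.not Lᶜ where
  vars_subset := h.vars_subset
  sat_iff M n hn := not_congr (h.sat_iff M n hn)

theorem inter (hK : Expresses ρ κ K) (hL : Expresses ρ χ L) : Expresses ρ (κ.and χ) (K ∩ L) where
  vars_subset := Set.union_subset hK.vars_subset hL.vars_subset
  sat_iff M n hn := and_congr (hK.sat_iff M n hn) (hL.sat_iff M n hn)

theorem sat_untl_iff (hK : Expresses ρ κ K) (hL : Expresses ρ χ L) (M : TModel) (n : ℕ) :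
    LTL.sat M n (χ.untl κ) ↔ ∃ m, n < m ∧ m ≤ M.len ∧ (encode ρ M).drop m ∈ L ∧
      ∀ k, n < k → k < m → (encode ρ M).drop k ∈ K :=
  exists_congr fun m => and_congr_right fun _ => and_congr_right fun hm =>
    and_congr (hL.sat_iff M m hm) <| forall_congr' fun k => imp_congr_right fun _ =>
      imp_congr_right fun hk => hK.sat_iff M k (hk.le.trans hm)

theorem sat_not_ev_not_iff (hK : Expresses ρ κ K) (M : TModel) (n : ℕ) :
    LTL.sat M n (.not (.ev (.not κ))) ↔
      ∀ k, n < k → k ≤ M.len → (encode ρ M).drop k ∈ K := by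
  simp only [LTL.sat, not_exists, not_and, not_not]
  exact forall_congr' fun k => imp_congr_right fun _ => imp_congr_right fun hk => hK.sat_iff M k hk

theorem strictUntil_of_nil_notMem (hK : Expresses ρ κ K) (hL : Expresses ρ χ L) (h : [] ∉ L) :
    Expresses ρ (χ.untl κ) {w | StrictUntil K L w} where
  vars_subset := Set.union_subset hL.vars_subset hK.vars_subset
  sat_iff M n hn := by
    simp only [hK.sat_untl_iff hL, Set.mem_ofPred_eq, strictUntil_drop_encode_iff hn, h, false_and,
      or_false]

theorem strictUntil_of_nil_mem (hK : Expresses ρ κ K) (hL : Expresses ρ χ L) (h : [] ∈ L) :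
    Expresses ρ ((χ.untl κ).or (.not (.ev (.not κ)))) {w | StrictUntil K L w} where
  vars_subset := Set.union_subset (Set.union_subset hL.vars_subset hK.vars_subset) hK.vars_subset
  sat_iff M n hn := by
    simp only [LTL.sat_or, hK.sat_untl_iff hL, hK.sat_not_ev_not_iff, Set.mem_ofPred_eq,
      strictUntil_drop_encode_iff hn, h, true_and]

end Expresses

theorem LTL.exists_sat_iff_forall_mem (s : Finset ℕ) (a : Set ℕ) :
    ∃ χ : LTL, χ.vars ⊆ s ∧ ∀ M n, LTL.sat M n χ ↔ ∀ p ∈ s, (M.V p n ↔ p ∈ a) := by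
  induction s using Finset.induction_on with
  | empty => exact ⟨.top, Set.empty_subset _, by simp [LTL.sat]⟩
  | insert p s _ ih =>
    obtain ⟨χ, hvars, hχ⟩ := ih
    have hsubset : {p} ∪ χ.vars ⊆ (insert p s : Finset ℕ) := by
      rw [Finset.coe_insert]
      exact Set.union_subset_union_right _ hvars
    by_cases hp : p ∈ a
    · exact ⟨.and (.var p) χ, hsubset, by simp [LTL.sat, hχ, hp]⟩
    · exact ⟨.and (.not (.var p)) χ, hsubset, by simp [LTL.sat, hχ, hp]⟩

theorem exists_expresses_head {ρ : Set ℕ} (hρ : ρ.Finite) (a : {a : Set ℕ // a ⊆ ρ}) :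
    ∃ χ, Expresses ρ χ {w | w.head? = some a} := by
  obtain ⟨χ, hvars, hχ⟩ := LTL.exists_sat_iff_forall_mem hρ.toFinset a
  refine ⟨χ, by simpa using hvars, fun M n hn => ?_⟩
  have hn : n < (encode ρ M).length := by rw [length_encode]; omega
  simp only [hχ, Set.mem_ofPred_eq, List.head?_drop, List.getElem?_eq_getElem hn,
    Option.some_inj, Subtype.ext_iff, coe_getElem_encode, Set.ext_iff, Set.Finite.mem_toFinset]
  have := a.2
  grind

theorem TemporallyDefinable.exists_expresses {ρ : Set ℕ} (hρ : ρ.Finite)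
    {L : Set (List {a : Set ℕ // a ⊆ ρ})} (hL : TemporallyDefinable L) :
    ∃ χ, Expresses ρ χ L := by
  induction hL with
  | empty => exact ⟨_, .empty⟩
  | head a => exact exists_expresses_head hρ a
  | compl _ ih =>
    obtain ⟨χ, hχ⟩ := ih
    exact ⟨_, hχ.compl⟩
  | inter _ _ ihK ihL =>
    obtain ⟨κ, hκ⟩ := ihK
    obtain ⟨χ, hχ⟩ := ihL
    exact ⟨_, hκ.inter hχ⟩
  | @strictUntil K L _ _ ihK ihL =>
    obtain ⟨κ, hκ⟩ := ihK
    obtain ⟨χ, hχ⟩ := ihL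
    by_cases hnil : [] ∈ L
    exacts [⟨_, hκ.strictUntil_of_nil_mem hχ hnil⟩, ⟨_, hκ.strictUntil_of_nil_notMem hχ hnil⟩]

/-! ### From LTL to first-order logic -/

section Translation

variable {A : Type} {n : ℕ}

local instance (w : List A) : (wordLang A).Structure (Fin w.length) := wordStructure w

/-- The first-order formula `x_i < x_j`. -/
def ltFormula (A : Type) (i j : Fin n) : (wordLang A).BoundedFormula Empty n :=
  .rel (l := 2) () ![.var (.inr i), .var (.inr j)]

theorem realize_ltFormula {w : List A} {v : Fin n → Fin w.length} {i j : Fin n} :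
    (ltFormula A i j).Realize default v ↔ v i < v j := Iff.rfl

/-- The first-order formula stating that position `x_i` carries the letter `a`. -/
def letterFormula (a : A) (i : Fin n) : (wordLang A).BoundedFormula Empty n :=
  .rel (l := 1) a ![.var (.inr i)]

theorem realize_letterFormula {w : List A} {v : Fin n → Fin w.length} {a : A} {i : Fin n} :
    (letterFormula a i).Realize default v ↔ w.get (v i) = a := Iff.rfl

/-- The strict until of the formulas `θ` and `η`, evaluated at `x_n`. The formula `θ` is about the
witness `x_{n+1}`, and `η` about the positions `x_{n+2}` between `x_n` and the witness. -/
def untilFormula (θ : (wordLang A).BoundedFormula Empty (n + 2))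
    (η : (wordLang A).BoundedFormula Empty (n + 3)) : (wordLang A).BoundedFormula Empty (n + 1) :=
  .ex (ltFormula A (Fin.last n).castSucc (Fin.last (n + 1)) ⊓ θ ⊓
    .all ((ltFormula A (Fin.last n).castSucc.castSucc (Fin.last (n + 2))).imp
      ((ltFormula A (Fin.last (n + 2)) (Fin.last (n + 1)).castSucc).imp η)))

theorem realize_untilFormula {θ : (wordLang A).BoundedFormula Empty (n + 2)}
    {η : (wordLang A).BoundedFormula Empty (n + 3)} {w : List A}
    {v : Fin (n + 1) → Fin w.length} :
    (untilFormula θ η).Realize default v ↔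
      ∃ x, v (Fin.last n) < x ∧ θ.Realize default (Fin.snoc v x) ∧
        ∀ y, v (Fin.last n) < y → y < x → η.Realize default (Fin.snoc (Fin.snoc v x) y) := by
  simp only [untilFormula, Language.BoundedFormula.realize_ex, Language.BoundedFormula.realize_inf,
    Language.BoundedFormula.realize_all, Language.BoundedFormula.realize_imp, realize_ltFormula,
    Fin.snoc_castSucc, Fin.snoc_last, and_assoc]

/-- The first-order formula `θ` about its last free variable says what the LTL-formula `χ` says
about the time point named by that variable. -/
def Translates (ρ : Set ℕ) (θ : (wordLang {a : Set ℕ // a ⊆ ρ}).BoundedFormula Empty (n + 1))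
    (χ : LTL) : Prop :=
  ∀ (M : TModel) (v : Fin (n + 1) → Fin (encode ρ M).length),
    θ.Realize default v ↔ LTL.sat M (v (Fin.last n)) χ

namespace Translates

variable {ρ : Set ℕ}

theorem top : Translates ρ (⊤ : (wordLang _).BoundedFormula Empty (n + 1)) .top :=
  fun _ _ => iff_of_true id trivial

theorem not {θ : (wordLang _).BoundedFormula Empty (n + 1)} {χ : LTL} (h : Translates ρ θ χ) :
    Translates ρ (∼θ) χ.not :=
  fun M v => not_congr (h M v)

theorem and {θ η : (wordLang _).BoundedFormula Empty (n + 1)} {χ κ : LTL}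
    (hθ : Translates ρ θ χ) (hη : Translates ρ η κ) : Translates ρ (θ ⊓ η) (χ.and κ) :=
  fun M v => Language.BoundedFormula.realize_inf.trans (and_congr (hθ M v) (hη M v))

theorem untl {θ : (wordLang _).BoundedFormula Empty (n + 2)}
    {η : (wordLang _).BoundedFormula Empty (n + 3)} {χ κ : LTL}
    (hθ : Translates ρ θ χ) (hη : Translates ρ η κ) :
    Translates ρ (untilFormula θ η) (χ.untl κ) := by
  intro M v
  simp only [realize_untilFormula, hθ M, hη M, Fin.snoc_last, LTL.sat, Fin.exists_iff,
    Fin.forall_iff, length_encode, Fin.lt_def]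
  constructor
  · rintro ⟨m, hm, hnm, hχ, hκ⟩
    exact ⟨m, hnm, by omega, hχ, fun k hk hkm => hκ k (by omega) hk hkm⟩
  · rintro ⟨m, hnm, hm, hχ, hκ⟩
    exact ⟨m, by omega, hnm, hχ, fun k _ hk hkm => hκ k hk hkm⟩

theorem ev {θ : (wordLang _).BoundedFormula Empty (n + 2)} {χ : LTL} (h : Translates ρ θ χ) :
    Translates ρ (untilFormula θ ⊤) χ.ev := by
  intro M v
  rw [(h.untl top) M v]
  simp [LTL.sat]

theorem next {θ : (wordLang _).BoundedFormula Empty (n + 2)} {χ : LTL} (h : Translates ρ θ χ) :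
    Translates ρ (untilFormula θ ⊥) χ.next := by
  intro M v
  have hbot : Translates ρ (⊥ : (wordLang _).BoundedFormula Empty (n + 3)) (.not .top) :=
    fun _ _ => iff_of_false id (not_not_intro trivial)
  rw [(h.untl hbot) M v]
  simp only [LTL.sat, not_true_eq_false]
  constructor
  · rintro ⟨m, hnm, hm, hχ, hbetween⟩
    obtain rfl : m = v (Fin.last n) + 1 := by
      by_contra hne
      exact hbetween (v (Fin.last n) + 1) (by omega) (by omega)
    exact ⟨hm, hχ⟩
  · rintro ⟨hn, hχ⟩
    exact ⟨_, Nat.lt_succ_self _, hn, hχ, fun k _ _ => by omega⟩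

end Translates

theorem exists_translates_var {ρ : Set ℕ} (hρ : ρ.Finite) {p : ℕ} (hp : p ∈ ρ) (n : ℕ) :
    ∃ θ : (wordLang _).BoundedFormula Empty (n + 1), Translates ρ θ (.var p) := by
  have : Finite {a : Set ℕ // a ⊆ ρ} := hρ.finite_subsets
  refine ⟨.iSup fun a : {a : {a : Set ℕ // a ⊆ ρ} // p ∈ a.1} => letterFormula a.1 (Fin.last n),
    fun M v => ?_⟩
  simp [Language.BoundedFormula.realize_iSup, realize_letterFormula, LTL.sat,
    coe_getElem_encode, hp]

theorem exists_translates {ρ : Set ℕ} (hρ : ρ.Finite) {χ : LTL} (hχ : χ.vars ⊆ ρ) (n : ℕ) :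
    ∃ θ : (wordLang _).BoundedFormula Empty (n + 1), Translates ρ θ χ := by
  induction χ generalizing n with
  | top => exact ⟨_, .top⟩
  | var p => exact exists_translates_var hρ (hχ rfl) n
  | and _ _ ih₁ ih₂ =>
    obtain ⟨hχ₁, hχ₂⟩ := Set.union_subset_iff.1 hχ
    obtain ⟨_, hθ⟩ := ih₁ hχ₁ n
    obtain ⟨_, hη⟩ := ih₂ hχ₂ n
    exact ⟨_, hθ.and hη⟩
  | not _ ih => exact (ih hχ n).imp' _ fun _ => Translates.not
  | next _ ih => exact (ih hχ (n + 1)).imp' _ fun _ => Translates.next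
  | ev _ ih => exact (ih hχ (n + 1)).imp' _ fun _ => Translates.ev
  | untl _ _ ih₁ ih₂ =>
    obtain ⟨hχ₁, hχ₂⟩ := Set.union_subset_iff.1 hχ
    obtain ⟨_, hθ⟩ := ih₁ hχ₁ (n + 1)
    obtain ⟨_, hη⟩ := ih₂ hχ₂ (n + 2)
    exact ⟨_, hθ.untl hη⟩

/-- The sentence stating that `θ` holds at the first position of a word. -/
def atFirst (θ : (wordLang A).BoundedFormula Empty 1) : (wordLang A).Sentence :=
  .ex (θ ⊓ .all ∼(ltFormula A 1 0))

theorem satWord_atFirst {w : List A} (hw : 0 < w.length) {θ : (wordLang A).BoundedFormula Empty 1} :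
    SatWord w (atFirst θ) ↔ θ.Realize default fun _ => (⟨0, hw⟩ : Fin w.length) := by
  have hrealize : SatWord w (atFirst θ) ↔
      ∃ x : Fin w.length, θ.Realize default (fun _ => x) ∧ ∀ y, ¬ y < x := by
    have hsnoc (x : Fin w.length) : Fin.snoc default x = (fun _ => x : Fin 1 → Fin w.length) :=
      funext fun i => by rw [Fin.fin_one_eq_zero i]; rfl
    simp only [SatWord, atFirst, Language.Sentence.Realize, Language.Formula.Realize,
      Language.BoundedFormula.realize_ex, Language.BoundedFormula.realize_inf,
      Language.BoundedFormula.realize_all, Language.BoundedFormula.realize_not, realize_ltFormula,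
      hsnoc]
    rfl
  rw [hrealize]
  constructor
  · rintro ⟨x, hθ, hx⟩
    obtain rfl : x = ⟨0, hw⟩ := Fin.ext (Nat.eq_zero_of_not_pos (hx ⟨0, hw⟩))
    exact hθ
  · exact fun hθ => ⟨_, hθ, fun y => Nat.not_lt_zero y⟩

theorem LTL.foDefinable_image_encode {ρ : Set ℕ} (hρ : ρ.Finite) {χ : LTL} (hχ : χ.vars ⊆ ρ) :
    FODefinable (encode ρ '' {M | LTL.sat M 0 χ}) := by
  obtain ⟨θ, hθ⟩ := exists_translates hρ hχ 0
  have satWord_encode (M : TModel) : SatWord (encode ρ M) (atFirst θ) ↔ LTL.sat M 0 χ := by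
    rw [satWord_atFirst (by simp [length_encode]), hθ]
  refine ⟨atFirst θ, Set.ext fun w => ?_⟩
  constructor
  · rintro ⟨M, hM, rfl⟩
    exact ⟨range_encode.subset ⟨M, rfl⟩, (satWord_encode M).2 hM⟩
  · rintro ⟨hw, hsat⟩
    obtain ⟨M, rfl⟩ := range_encode.superset hw
    exact ⟨M, (satWord_encode M).1 hsat, rfl⟩

end Translation

/-! ### Interpolants as separators -/

theorem FODefinable.exists_sat_iff {ρ : Set ℕ} (hρ : ρ.Finite)
    {L : Set (List {a : Set ℕ // a ⊆ ρ})} (hL : FODefinable L) :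
    ∃ χ : LTL, χ.vars ⊆ ρ ∧ ∀ M, LTL.sat M 0 χ ↔ encode ρ M ∈ L := by
  have : Finite {a : Set ℕ // a ⊆ ρ} := hρ.finite_subsets
  obtain ⟨θ, rfl⟩ := hL
  obtain ⟨χ, hχ⟩ := (aperiodicallyRecognizable_satWord θ).temporallyDefinable.exists_expresses hρ
  refine ⟨χ, hχ.vars_subset, fun M => ?_⟩
  have hne : encode ρ M ≠ [] := range_encode.subset ⟨M, rfl⟩
  simpa [hne] using hχ.sat_iff M 0 M.len.zero_le

theorem LTL_interpolant_iff_FO_separable_general {ρ : Set ℕ} (hρ : ρ.Finite) (φ ψ : LTL)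
    (Lφ Lψ : Set (List {a : Set ℕ // a ⊆ ρ}))
    (hLφ : Lφ = {w | ∃ M : TModel, IsRhoModel ρ M ∧
      SatEx (φ.vars \ ρ) M φ ∧ w = encode ρ M})
    (hLψ : Lψ = {w | ∃ M : TModel, IsRhoModel ρ M ∧
      SatEx (ψ.vars \ ρ) M (LTL.not ψ) ∧ w = encode ρ M}) :
    (∃ χ : LTL, χ.vars ⊆ ρ ∧ LTLEntails φ χ ∧ LTLEntails χ ψ) ↔
      (∃ L : Set (List {a : Set ℕ // a ⊆ ρ}), FODefinable L ∧ Lφ ⊆ L ∧ Lψ ∩ L = ∅) := by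
  replace hLφ := hLφ.trans (setOf_isRhoModel_satEx_eq_image_encode φ)
  replace hLψ := hLψ.trans (setOf_isRhoModel_satEx_eq_image_encode (.not ψ))
  subst hLφ hLψ
  constructor
  · rintro ⟨χ, hχ, hφχ, hχψ⟩
    refine ⟨_, LTL.foDefinable_image_encode hρ hχ, Set.image_mono hφχ, ?_⟩
    rw [← Set.disjoint_iff_inter_eq_empty, Set.disjoint_left]
    rintro _ ⟨M, hM, rfl⟩ ⟨N, hN, hNM⟩
    exact hM (hχψ M ((sat_iff_of_encode_eq hχ hNM N.len.zero_le).1 hN))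
  · rintro ⟨L, hL, hφL, hψL⟩
    obtain ⟨χ, hχ, hsat⟩ := hL.exists_sat_iff hρ
    refine ⟨χ, hχ, fun M hM => (hsat M).2 (hφL ⟨M, hM, rfl⟩), fun M hM => ?_⟩
    by_contra hψ
    exact Set.eq_empty_iff_forall_notMem.1 hψL _ ⟨⟨M, hψ, rfl⟩, (hsat M).1 hM⟩

/-- Craig interpolant existence for LTL over finite timelines is equivalent to
FO(<)-separability of the regular languages `L_φ` and `L_¬ψ` over `A_ρ = 2^ρ`. -/
theorem LTL_interpolant_iff_FO_separable
    (φ ψ : LTL) (ρ : Set ℕ) (hρ : ρ = φ.vars ∩ ψ.vars)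
    (Lφ Lψ : Set (List {a : Set ℕ // a ⊆ ρ}))
    (hLφ : Lφ = {w | ∃ M : TModel, IsRhoModel ρ M ∧
      SatEx (φ.vars \ ρ) M φ ∧ w = encode ρ M})
    (hLψ : Lψ = {w | ∃ M : TModel, IsRhoModel ρ M ∧
      SatEx (ψ.vars \ ρ) M (LTL.not ψ) ∧ w = encode ρ M}) :
    (∃ χ : LTL, χ.vars ⊆ φ.vars ∩ ψ.vars ∧ LTLEntails φ χ ∧ LTLEntails χ ψ) ↔
      (∃ L : Set (List {a : Set ℕ // a ⊆ ρ}), FODefinable L ∧ Lφ ⊆ L ∧ Lψ ∩ L = ∅) := by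
  subst hρ
  exact LTL_interpolant_iff_FO_separable_general (φ.vars_finite.inter_of_left _) φ ψ Lφ Lψ hLφ hLψ
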